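/- (Zero bound on (−∞,−1) in the proof of Theorem 4.1.) Let n ≥ 3 be an integer, and let M_0 : (−∞,−1) → ℝ be of the form M_0(h) = (1/(2h+1))·[Q_0(h) + Q_1(h)√(h² + h) + Q_2(h)·ln(−2√(h²+h) − 2h − 1)], where Q_0, Q_1, Q_2 are real polynomials with deg Q_0 ≤ n, deg Q_1 ≤ n−1, deg Q_2 ≤ 3. Then M_0 has at most 3n + 1 zeros on (−∞, −1) counting multiplicity. -/

import Mathlib

/-!
Write `D = h² + h`, `L = log (-2√D - 2h - 1)` and `G = Q0 + Q1 √D + Q2 L`, so that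
`M0 = G / (2h + 1)` has the same zeros as `G`, with the same multiplicities. On `(-∞, -1)` one has
`L' = 1 / √D`, hence by induction

  `G⁽ᵏ⁾ = Q0⁽ᵏ⁾ + P_k √D / Dᵏ + Q2⁽ᵏ⁾ L`,  `deg P_k ≤ n - 1 + k`,

for the polynomials `P_k` of `radicalPart` (`iteratedDeriv_genFun`, `natDegree_radicalPart_le`).
Since `deg Q0 ≤ n` and `deg Q2 ≤ 3 ≤ n`, at `k = n + 1` only the middle term survives, and it has at
most `deg P_{n+1} ≤ 2n` zeros, unless it vanishes identically. Each of the `n + 1` integrations back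
to `G` adds at most one zero by Rolle's theorem with multiplicities (`ZeroOrFew.of_deriv`), which
gives `2n + (n + 1) = 3n + 1`.
-/

/-- `f` has at most `N` zeros on `I` counting multiplicity: for any finitely many
distinct points of `I` that are zeros of `f` with multiplicities `l x`, the sum of
the multiplicities is at most `N`. -/
def ZerosLE (f : ℝ → ℝ) (I : Set ℝ) (N : ℕ) : Prop :=
  ∀ (s : Finset ℝ) (l : ℝ → ℕ),
    (↑s : Set ℝ) ⊆ I →
    (∀ x ∈ s, 1 ≤ l x ∧ (∀ j < l x, iteratedDeriv j f x = 0) ∧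
      iteratedDeriv (l x) f x ≠ 0) →
    ∑ x ∈ s, l x ≤ N

open Polynomial Set Topology
open scoped ContDiff

/-- The total order of vanishing of `f` on `I` is at most `N`. Here `l x` is only a lower bound for
the order of vanishing at `x` (possibly `0`), so no derivative is required to be nonzero. -/
def VanishLE (f : ℝ → ℝ) (I : Set ℝ) (N : ℕ) : Prop :=
  ∀ (s : Finset ℝ) (l : ℝ → ℕ), (↑s : Set ℝ) ⊆ I →
    (∀ x ∈ s, ∀ j < l x, iteratedDeriv j f x = 0) → ∑ x ∈ s, l x ≤ N

/-- Either `f` vanishes identically on `I`, or its total order of vanishing there is at most `N`.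
Unlike `VanishLE` alone, this dichotomy passes from `deriv f` to `f`. -/
def ZeroOrFew (f : ℝ → ℝ) (I : Set ℝ) (N : ℕ) : Prop :=
  (∀ x ∈ I, f x = 0) ∨ VanishLE f I N

/-! ### Rolle's theorem with multiplicities -/

/-- Between consecutive points of a finite zero set of `f` lies a zero of `deriv f`. The clause
`∃ x ∈ s, t < x` keeps the new zeros below the maximum of `s`, which drives the induction. -/
lemma exists_interleaved {f : ℝ → ℝ} {I : Set ℝ} (hI : I.OrdConnected) (hf : ContinuousOn f I)
    (s : Finset ℝ) : (↑s : Set ℝ) ⊆ I → (∀ x ∈ s, f x = 0) →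
    ∃ t : Finset ℝ, (↑t : Set ℝ) ⊆ I ∧ Disjoint s t ∧ (∀ y ∈ t, deriv f y = 0) ∧
      (∀ y ∈ t, ∃ x ∈ s, y < x) ∧ s.card ≤ t.card + 1 := by
  induction s using Finset.induction_on_max with
  | empty => exact fun _ _ => ⟨∅, by simp⟩
  | insert a s ha ih =>
    intro hs h0
    have hsI : (↑s : Set ℝ) ⊆ I := fun x hx => hs (by simp [Finset.mem_coe.1 hx])
    have haI : a ∈ I := hs (by simp)
    have has : a ∉ s := fun h => lt_irrefl _ (ha a h)
    obtain ⟨t, htI, hdisj, hd, hlt, hcard⟩ := ih hsI fun x hx => h0 x (by simp [hx])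
    rcases s.eq_empty_or_nonempty with rfl | hne
    · exact ⟨∅, by simp⟩
    have hb := s.max'_mem hne
    have hmax : ∀ x ∈ s, x ≤ s.max' hne := fun x hx => s.le_max' x hx
    generalize s.max' hne = b at hb hmax
    have hba := ha b hb
    have hsub : Icc b a ⊆ I := hI.out (hsI hb) haI
    obtain ⟨c, hc, hc0⟩ := exists_deriv_eq_zero hba (hf.mono hsub)
      ((h0 b (by simp [hb])).trans (h0 a (by simp)).symm)
    have htb : ∀ y ∈ t, y < b := fun y hy => by
      obtain ⟨x, hx, hyx⟩ := hlt y hy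
      exact hyx.trans_le (hmax x hx)
    have hct : c ∉ t := fun h => lt_asymm (htb c h) hc.1
    refine ⟨insert c t, ?_, ?_, ?_, ?_, ?_⟩
    · intro y hy
      rcases Finset.mem_insert.1 (Finset.mem_coe.1 hy) with rfl | hy
      · exact hsub (Ioo_subset_Icc_self hc)
      · exact htI hy
    · rw [Finset.disjoint_left] at hdisj ⊢
      intro x hx hx'
      rcases Finset.mem_insert.1 hx with rfl | hx <;>
        rcases Finset.mem_insert.1 hx' with rfl | hx'
      · exact lt_irrefl _ hc.2
      · exact lt_asymm (htb _ hx') hba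
      · exact not_lt.2 (hmax _ hx) hc.1
      · exact hdisj hx hx'
    · intro y hy
      rcases Finset.mem_insert.1 hy with rfl | hy
      exacts [hc0, hd y hy]
    · intro y hy
      refine ⟨a, by simp, ?_⟩
      rcases Finset.mem_insert.1 hy with rfl | hy
      exacts [hc.2, (htb y hy).trans hba]
    · rw [Finset.card_insert_of_notMem has, Finset.card_insert_of_notMem hct]
      omega

lemma VanishLE.of_deriv {f : ℝ → ℝ} {I : Set ℝ} {N : ℕ} (hI : I.OrdConnected)
    (hf : ContinuousOn f I) (h : VanishLE (deriv f) I N) : VanishLE f I (N + 1) := by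
  intro s l hs hl
  have hsum : ∑ x ∈ s with 1 ≤ l x, l x = ∑ x ∈ s, l x :=
    Finset.sum_filter_of_ne fun x _ hx => Nat.one_le_iff_ne_zero.2 hx
  rw [← hsum]
  have hu : ∀ x ∈ s.filter fun x => 1 ≤ l x, x ∈ s ∧ 1 ≤ l x := fun x hx => Finset.mem_filter.1 hx
  generalize (s.filter fun x => 1 ≤ l x) = u at hu
  obtain ⟨t, htI, hdisj, hd, -, hcard⟩ := exists_interleaved hI hf u
    (fun x hx => hs (hu x hx).1) (fun x hx => by simpa using hl x (hu x hx).1 0 (hu x hx).2)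
  -- A zero of order `l x` contributes `l x - 1` to `deriv f`; the interlaced zeros contribute `1`.
  have key := h (u ∪ t) (fun x => if x ∈ u then l x - 1 else 1) (by
      rw [Finset.coe_union]; exact union_subset (fun x hx => hs (hu x hx).1) htI) (by
    intro x hx j hj
    by_cases hxu : x ∈ u
    · rw [if_pos hxu] at hj
      rw [← iteratedDeriv_succ']
      exact hl x (hu x hxu).1 _ (by omega)
    · rw [if_neg hxu, Nat.lt_one_iff] at hj
      subst hj
      simpa using hd x ((Finset.mem_union.1 hx).resolve_left hxu))
  rw [Finset.sum_union hdisj, Finset.sum_congr rfl fun x hx => if_pos hx,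
    Finset.sum_congr rfl fun x hx => if_neg (Finset.disjoint_right.1 hdisj hx)] at key
  have hsplit : ∑ x ∈ u, l x = ∑ x ∈ u, (l x - 1) + u.card := by
    rw [Finset.card_eq_sum_ones, ← Finset.sum_add_distrib]
    exact Finset.sum_congr rfl fun x hx => (Nat.sub_add_cancel (hu x hx).2).symm
  rw [Finset.sum_const, smul_eq_mul, mul_one] at key
  omega

/-- If `deriv f` vanishes identically then `f` is constant: it is zero or it has no zeros. -/
lemma ZeroOrFew.of_deriv {f : ℝ → ℝ} {I : Set ℝ} {N : ℕ} (hI : I.OrdConnected) (hIo : IsOpen I)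
    (hf : DifferentiableOn ℝ f I) (h : ZeroOrFew (deriv f) I N) : ZeroOrFew f I (N + 1) := by
  rcases h with h | h
  · obtain ⟨a, ha⟩ := hIo.exists_is_const_of_deriv_eq_zero hI.isPreconnected hf h
    by_cases ha0 : a = 0
    · exact Or.inl fun x hx => (ha x hx).trans ha0
    · refine Or.inr fun s l hs hl => ?_
      rw [Finset.sum_eq_zero fun x hx => ?_]
      · exact Nat.zero_le _
      · by_contra hlx
        exact ha0 ((ha x (hs hx)).symm.trans (by simpa using hl x hx 0 (Nat.pos_of_ne_zero hlx)))
  · exact Or.inr (h.of_deriv hI hf.continuousOn)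

lemma ZeroOrFew.of_iteratedDeriv {I : Set ℝ} {N : ℕ} (hI : I.OrdConnected) (hIo : IsOpen I)
    (k : ℕ) : ∀ f : ℝ → ℝ, ContDiffOn ℝ ∞ f I → ZeroOrFew (iteratedDeriv k f) I N →
      ZeroOrFew f I (N + k) := by
  induction k with
  | zero => intro f _ h; simpa using h
  | succ k ih =>
    intro f hf h
    rw [iteratedDeriv_succ'] at h
    obtain ⟨hd, hf'⟩ := (contDiffOn_infty_iff_deriv_of_isOpen hIo).1 hf
    exact (ih _ hf' h).of_deriv hI hIo hd

/-! ### Order of vanishing of products and polynomials -/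

lemma iteratedDeriv_mul_eq_zero {c f g : ℝ → ℝ} {x : ℝ} {l : ℕ} (hc : ContDiffAt ℝ ∞ c x)
    (hf : ContDiffAt ℝ ∞ f x) (hg : ∀ᶠ y in 𝓝 x, g y = c y * f y)
    (h : ∀ j < l, iteratedDeriv j f x = 0) : ∀ j < l, iteratedDeriv j g x = 0 := by
  intro j hj
  have hle : ((j : ℕ) : WithTop ℕ∞) ≤ ∞ := by exact_mod_cast le_top
  have hg' : g =ᶠ[𝓝 x] c * f := hg
  rw [hg'.iteratedDeriv_eq j, iteratedDeriv_mul (hc.of_le hle) (hf.of_le hle)]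
  exact Finset.sum_eq_zero fun i _ => by rw [h (j - i) (by omega), mul_zero]

lemma iteratedDeriv_polynomial (p : ℝ[X]) (j : ℕ) :
    iteratedDeriv j (fun x => p.eval x) = fun x => (derivative^[j] p).eval x := by
  induction j with
  | zero => simp
  | succ j ih =>
    rw [iteratedDeriv_succ, ih, Function.iterate_succ_apply']
    ext x
    exact Polynomial.deriv _

lemma vanishLE_polynomial {p : ℝ[X]} (hp : p ≠ 0) (I : Set ℝ) :
    VanishLE (fun x => p.eval x) I p.natDegree := by
  intro s l _ hl
  have hmul : ∀ x ∈ s, l x ≤ p.roots.count x := by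
    intro x hx
    rw [count_roots]
    rcases Nat.eq_zero_or_pos (l x) with h0 | h0
    · omega
    · have := (lt_rootMultiplicity_iff_isRoot_iterate_derivative (n := l x - 1) (t := x) hp).2
        fun m hm => by
          have := hl x hx m (by omega)
          rwa [iteratedDeriv_polynomial] at this
      omega
  calc ∑ x ∈ s, l x ≤ ∑ x ∈ s, p.roots.count x := Finset.sum_le_sum hmul
    _ ≤ p.roots.card := by
      rw [← Multiset.toFinset_sum_count_eq p.roots]
      refine Finset.sum_le_sum_of_ne_zero fun x _ hx => ?_
      exact Multiset.mem_toFinset.2 (Multiset.count_ne_zero.1 hx)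
    _ ≤ p.natDegree := card_roots' p

/-! ### The derivatives of `Q0 + Q1 √D + Q2 L` -/

/-- The function `Q0 + Q1 √(h² + h) + Q2 log (-2√(h² + h) - 2h - 1)`. -/
noncomputable def genFun (Q0 Q1 Q2 : ℝ[X]) (h : ℝ) : ℝ :=
  Q0.eval h + Q1.eval h * Real.sqrt (h ^ 2 + h)
    + Q2.eval h * Real.log (-2 * Real.sqrt (h ^ 2 + h) - 2 * h - 1)

/-- The polynomials `P_k` such that `P_k √D / Dᵏ` is the radical part of the `k`-th derivative of
`Q1 √D + Q2 L`, where `D = X² + X`. The last summand of the recursion comes from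
`Q2⁽ᵏ⁾ L' = Q2⁽ᵏ⁾ / √D`. -/
noncomputable def radicalPart (Q1 Q2 : ℝ[X]) : ℕ → ℝ[X]
  | 0 => Q1
  | k + 1 => derivative (radicalPart Q1 Q2 k) * (X ^ 2 + X)
      + C (1 / 2 - (k : ℝ)) * radicalPart Q1 Q2 k * (2 * X + 1)
      + derivative^[k] Q2 * (X ^ 2 + X) ^ k

/-- The degree bound only needs `deg (Q2⁽ᵏ⁾ Dᵏ) ≤ k + 3 ≤ n + k`; when `k > 3` this product is
`0`, so truncated subtraction in `3 - k` has to be avoided. -/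
lemma natDegree_radicalPart_le {n : ℕ} (hn : 3 ≤ n) {Q1 Q2 : ℝ[X]} (h1 : Q1.natDegree ≤ n - 1)
    (h2 : Q2.natDegree ≤ 3) (k : ℕ) : (radicalPart Q1 Q2 k).natDegree ≤ n - 1 + k := by
  have hD : (X ^ 2 + X : ℝ[X]).natDegree ≤ 2 := by compute_degree
  have hE : (2 * X + 1 : ℝ[X]).natDegree ≤ 1 := by compute_degree
  induction k with
  | zero => simpa [radicalPart] using h1
  | succ k ih =>
    rw [radicalPart]
    refine natDegree_add_le_of_degree_le (natDegree_add_le_of_degree_le ?_ ?_) ?_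
    · by_cases hd : (radicalPart Q1 Q2 k).natDegree = 0
      · rw [derivative_of_natDegree_zero hd]
        simp
      · have := natDegree_derivative_lt hd
        exact natDegree_mul_le.trans (by omega)
    · have := natDegree_C_mul_le (1 / 2 - (k : ℝ)) (radicalPart Q1 Q2 k)
      exact natDegree_mul_le.trans (by omega)
    · by_cases hk : 3 < k
      · rw [iterate_derivative_eq_zero (h2.trans_lt hk)]
        simp
      · have h3 := natDegree_iterate_derivative Q2 k
        have h4 : ((X ^ 2 + X : ℝ[X]) ^ k).natDegree ≤ k * 2 := natDegree_pow_le_of_le k hD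
        exact natDegree_mul_le.trans (by omega)

lemma disc_pos {x : ℝ} (hx : x < -1) : 0 < x ^ 2 + x := by nlinarith

lemma logArg_pos {x : ℝ} (hx : x < -1) : 0 < -2 * Real.sqrt (x ^ 2 + x) - 2 * x - 1 := by
  have h : Real.sqrt (x ^ 2 + x) < -(2 * x + 1) / 2 := by
    rw [Real.sqrt_lt' (by linarith)]
    nlinarith
  linarith

lemma hasDerivAt_disc (x : ℝ) : HasDerivAt (fun h : ℝ => h ^ 2 + h) (2 * x + 1) x := by
  have h := (hasDerivAt_pow 2 x).add (hasDerivAt_id x)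
  exact h.congr_deriv (by norm_num)

lemma hasDerivAt_sqrt_disc {x : ℝ} (hx : x < -1) :
    HasDerivAt (fun h : ℝ => Real.sqrt (h ^ 2 + h))
      ((2 * x + 1) / (2 * Real.sqrt (x ^ 2 + x))) x := by
  exact (hasDerivAt_disc x).sqrt (disc_pos hx).ne'

lemma hasDerivAt_log_part {x : ℝ} (hx : x < -1) :
    HasDerivAt (fun h : ℝ => Real.log (-2 * Real.sqrt (h ^ 2 + h) - 2 * h - 1))
      (1 / Real.sqrt (x ^ 2 + x)) x := by
  have h := ((((hasDerivAt_sqrt_disc hx).const_mul (-2)).sub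
    ((hasDerivAt_id x).const_mul 2)).sub_const 1).log (logArg_pos hx).ne'
  have hs := Real.sqrt_pos.2 (disc_pos hx)
  have hl := logArg_pos hx
  refine h.congr_deriv ?_
  simp only [Pi.sub_apply, id]
  generalize Real.sqrt (x ^ 2 + x) = r at *
  rw [div_eq_div_iff hl.ne' hs.ne']
  field_simp
  ring

lemma hasDerivAt_step (A P B : ℝ[X]) (k : ℕ) {x : ℝ} (hx : x < -1) :
    HasDerivAt (fun h : ℝ => A.eval h + P.eval h * Real.sqrt (h ^ 2 + h) / (h ^ 2 + h) ^ k
        + B.eval h * Real.log (-2 * Real.sqrt (h ^ 2 + h) - 2 * h - 1))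
      ((derivative A).eval x
        + (derivative P * (X ^ 2 + X) + C (1 / 2 - (k : ℝ)) * P * (2 * X + 1)
            + B * (X ^ 2 + X) ^ k).eval x * Real.sqrt (x ^ 2 + x) / (x ^ 2 + x) ^ (k + 1)
        + (derivative B).eval x * Real.log (-2 * Real.sqrt (x ^ 2 + x) - 2 * x - 1)) x := by
  have hD := disc_pos hx
  have hs := Real.sqrt_pos.2 hD
  have hsq := Real.sq_sqrt hD.le
  have h := ((A.hasDerivAt x).add (((P.hasDerivAt x).mul (hasDerivAt_sqrt_disc hx)).div
    ((hasDerivAt_disc x).pow k) (pow_pos hD k).ne')).add ((B.hasDerivAt x).mul (hasDerivAt_log_part hx))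
  refine h.congr_deriv ?_
  simp only [Pi.mul_apply, Pi.pow_apply, eval_add, eval_mul, eval_pow, eval_X, eval_C, eval_one,
    eval_ofNat]
  generalize Real.log _ = L
  generalize Real.sqrt (x ^ 2 + x) = r at *
  have hr : r ≠ 0 := hs.ne'
  have hk : (k : ℝ) * (x ^ 2 + x) ^ (k - 1) = k * (x ^ 2 + x) ^ k / (x ^ 2 + x) := by
    rcases k with _ | k
    · simp
    · rw [Nat.add_sub_cancel, pow_succ (x ^ 2 + x) k, ← mul_assoc, mul_div_cancel_right₀ _ hD.ne']
  rw [hk, pow_succ (x ^ 2 + x) k]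
  have hDk := pow_pos hD k
  generalize (x ^ 2 + x) ^ k = d at *
  rw [← hsq]
  field_simp
  ring

lemma iteratedDeriv_genFun (Q0 Q1 Q2 : ℝ[X]) (k : ℕ) : ∀ x < (-1 : ℝ),
    iteratedDeriv k (genFun Q0 Q1 Q2) x = (derivative^[k] Q0).eval x
      + (radicalPart Q1 Q2 k).eval x * Real.sqrt (x ^ 2 + x) / (x ^ 2 + x) ^ k
      + (derivative^[k] Q2).eval x * Real.log (-2 * Real.sqrt (x ^ 2 + x) - 2 * x - 1) := by
  induction k with
  | zero => intro x _; simp [genFun, radicalPart]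
  | succ k ih =>
    intro x hx
    rw [iteratedDeriv_succ, Filter.EventuallyEq.deriv_eq
      (Filter.eventuallyEq_of_mem (Iio_mem_nhds hx) ih), (hasDerivAt_step _ _ _ k hx).deriv]
    simp only [radicalPart, Function.iterate_succ_apply']

lemma contDiffAt_disc (x : ℝ) : ContDiffAt ℝ ∞ (fun h : ℝ => h ^ 2 + h) x := by fun_prop

lemma contDiffAt_eval (p : ℝ[X]) (x : ℝ) : ContDiffAt ℝ ∞ (fun h => p.eval h) x := by
  simpa using (p.contDiff_aeval (𝕜 := ℝ) ∞).contDiffAt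

lemma contDiffAt_genFun (Q0 Q1 Q2 : ℝ[X]) {x : ℝ} (hx : x < -1) :
    ContDiffAt ℝ ∞ (genFun Q0 Q1 Q2) x := by
  have hs := (contDiffAt_disc x).sqrt (disc_pos hx).ne'
  have hl := (((contDiffAt_const (c := (-2 : ℝ))).mul hs).sub
    ((contDiffAt_const (c := (2 : ℝ))).mul contDiffAt_id)).sub (contDiffAt_const (c := (1 : ℝ)))
  exact ((contDiffAt_eval Q0 x).add ((contDiffAt_eval Q1 x).mul hs)).add
    ((contDiffAt_eval Q2 x).mul (hl.log (logArg_pos hx).ne'))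

lemma zeroOrFew_iteratedDeriv_genFun {n : ℕ} (hn : 3 ≤ n) {Q0 Q1 Q2 : ℝ[X]}
    (h0 : Q0.natDegree ≤ n) (h1 : Q1.natDegree ≤ n - 1) (h2 : Q2.natDegree ≤ 3) :
    ZeroOrFew (iteratedDeriv (n + 1) (genFun Q0 Q1 Q2)) (Iio (-1)) (2 * n) := by
  have hform : ∀ x < (-1 : ℝ), iteratedDeriv (n + 1) (genFun Q0 Q1 Q2) x
      = (radicalPart Q1 Q2 (n + 1)).eval x * Real.sqrt (x ^ 2 + x) / (x ^ 2 + x) ^ (n + 1) := by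
    intro x hx
    rw [iteratedDeriv_genFun _ _ _ _ x hx, iterate_derivative_eq_zero (p := Q0) (by omega),
      iterate_derivative_eq_zero (p := Q2) (by omega)]
    simp
  have hdeg := natDegree_radicalPart_le hn h1 h2 (n + 1)
  generalize radicalPart Q1 Q2 (n + 1) = P at *
  by_cases hP : P = 0
  · exact Or.inl fun x hx => by simp [hform x hx, hP]
  · refine Or.inr fun s l hs hl => ?_
    refine (vanishLE_polynomial hP (Iio (-1)) s l hs fun x hx => ?_).trans (by omega)
    have hx1 : x < -1 := hs hx
    have hD := disc_pos hx1
    have hsq := (contDiffAt_disc x).sqrt hD.ne'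
    have hpow := (contDiffAt_disc x).pow (n + 1)
    -- Multiplying by the smooth function `D^(n+1) / √D` turns the derivative into the polynomial.
    refine iteratedDeriv_mul_eq_zero
      (c := fun y => (y ^ 2 + y) ^ (n + 1) / Real.sqrt (y ^ 2 + y))
      (hpow.div hsq (Real.sqrt_pos.2 hD).ne') ?_ ?_ (hl x hx)
    · exact (((contDiffAt_eval P x).mul hsq).div hpow (pow_pos hD _).ne').congr_of_eventuallyEq
        (Filter.eventuallyEq_of_mem (Iio_mem_nhds hx1) hform)
    · filter_upwards [Iio_mem_nhds hx1] with y hy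
      have hDy := disc_pos hy
      have hr := Real.sqrt_pos.2 hDy
      rw [hform y hy]
      have hDk := pow_pos hDy (n + 1)
      generalize (y ^ 2 + y) ^ (n + 1) = d at *
      generalize Real.sqrt (y ^ 2 + y) = r at *
      field_simp

theorem zero_bound_on_neg_axis
    (n : ℕ) (hn : 3 ≤ n) (Q0 Q1 Q2 : Polynomial ℝ)
    (hQ0 : Q0.degree ≤ (n : ℕ)) (hQ1 : Q1.degree ≤ (n - 1 : ℕ))
    (hQ2 : Q2.degree ≤ (3 : ℕ))
    (M0 : ℝ → ℝ)
    (hM0 : ∀ h ∈ Set.Iio (-1 : ℝ), M0 h =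
      (1 / (2 * h + 1)) *
        (Q0.eval h + Q1.eval h * Real.sqrt (h ^ 2 + h)
          + Q2.eval h * Real.log (-2 * Real.sqrt (h ^ 2 + h) - 2 * h - 1))) :
    ZerosLE M0 (Set.Iio (-1)) (3 * n + 1) := by
  have hG : ZeroOrFew (genFun Q0 Q1 Q2) (Iio (-1)) (2 * n + (n + 1)) :=
    ZeroOrFew.of_iteratedDeriv ordConnected_Iio isOpen_Iio (n + 1) _
      (fun x hx => (contDiffAt_genFun Q0 Q1 Q2 hx).contDiffWithinAt)
      (zeroOrFew_iteratedDeriv_genFun hn (natDegree_le_of_degree_le hQ0)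
        (natDegree_le_of_degree_le hQ1) (natDegree_le_of_degree_le hQ2))
  have hM : ∀ h < (-1 : ℝ), M0 h = (1 / (2 * h + 1)) * genFun Q0 Q1 Q2 h := hM0
  intro s l hs hl
  rcases hG with hG | hG
  · -- If the numerator vanishes identically, no zero of `M0` has finite multiplicity.
    rcases s.eq_empty_or_nonempty with rfl | ⟨x, hx⟩
    · simp
    · refine absurd ?_ (hl x hx).2.2
      have hev : M0 =ᶠ[𝓝 x] fun _ => 0 := by
        filter_upwards [Iio_mem_nhds (show x < -1 from hs hx)] with y hy
        rw [hM y hy, hG y hy, mul_zero]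
      rw [hev.iteratedDeriv_eq]
      simp
  · refine (hG s l hs fun x hx => ?_).trans (by omega)
    have hx1 : x < -1 := hs hx
    have hlin : ContDiffAt ℝ ∞ (fun h : ℝ => 2 * h + 1) x := by fun_prop
    refine iteratedDeriv_mul_eq_zero hlin ?_ ?_ (hl x hx).2.1
    · exact (((contDiffAt_const (c := (1 : ℝ))).div hlin (by linarith)).mul
        (contDiffAt_genFun Q0 Q1 Q2 hx1)).congr_of_eventuallyEq
        (Filter.eventuallyEq_of_mem (Iio_mem_nhds hx1) hM)
    · filter_upwards [Iio_mem_nhds hx1] with y hy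
      have hy1 : y < -1 := hy
      have hne : 2 * y + 1 ≠ 0 := by linarith
      rw [hM y hy]
      field_simp
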